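/- arXiv:2408.14011 — 5 statements merged into one kernel-verified Lean document; each statement's English description precedes it below -/
import Mathlib

section
/- Let ψ be a unit vector in ℂ^{d₁} ⊗ ℂ^{d₂} (represented as ψ : Fin d₁ × Fin d₂ → ℂ with ∑_{i,j} |ψ(i,j)|² = 1), let ρ₁ be its reduced density matrix on the first factor, ρ₁(i,i') = ∑_j ψ(i,j)·conj(ψ(i',j)), and let C(ψ) = √(2(1 − Tr(ρ₁²))) be its concurrence. Then C(ψ) = 0 if and only if ψ is a product state, i.e. there exist vectors u : Fin d₁ → ℂ and v : Fin d₂ → ℂ with ψ(i,j) = u(i)·v(j) for all i, j. -/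
open scoped BigOperators

/-- The reduced density matrix on the first factor of a bipartite pure state:
`ρ₁ i i' = ∑ j, ψ (i, j) * conj (ψ (i', j))`. -/
noncomputable def redMat {α β : Type*} [Fintype β] (ψ : α × β → ℂ) : Matrix α α ℂ :=
  Matrix.of fun i i' => ∑ j, ψ (i, j) * (starRingEnd ℂ) (ψ (i', j))

/-- The concurrence `C(ψ) = √(2(1 − Tr(ρ₁²)))` of a bipartite pure state. -/
noncomputable def conc {α β : Type*} [Fintype α] [Fintype β] (ψ : α × β → ℂ) : ℝ :=
  Real.sqrt (2 * (1 - (Matrix.trace (redMat ψ * redMat ψ)).re))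

/-!
Arrange the coefficients of `ψ` in a matrix `A`, so that `ρ₁ = A * Aᴴ` and `ψ` is a product exactly
when all `2 × 2` minors of `A` vanish. By the Cauchy–Binet formula for these minors, the squared
moduli of the minors, over ordered pairs of rows and of columns, add up to
`2 * ((tr ρ₁) ^ 2 - tr (ρ₁ ^ 2))`, which is `C(ψ) ^ 2` as soon as `tr ρ₁ = 1`.
-/

open Matrix
open scoped Kronecker

section TwoMinors

variable {l m n R : Type*}

/-- The matrix of `2 × 2` minors `A i j * A i' j' - A i j' * A i' j` of `A`, an unnormalised second
compound matrix: rows and columns are indexed by all ordered pairs, so that each minor occurs with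
both signs and pairs with a repeated index contribute zeros. -/
def twoMinors [CommRing R] (A : Matrix m n R) : Matrix (m × m) (n × n) R :=
  A ⊗ₖ A - (A ⊗ₖ A).submatrix id Prod.swap

theorem twoMinors_apply [CommRing R] (A : Matrix m n R) (i i' : m) (j j' : n) :
    twoMinors A (i, i') (j, j') = A i j * A i' j' - A i j' * A i' j :=
  rfl

theorem twoMinors_conjTranspose [CommRing R] [StarRing R] (A : Matrix m n R) :
    twoMinors Aᴴ = (twoMinors A)ᴴ := by
  ext ⟨j, j'⟩ ⟨i, i'⟩
  simp only [twoMinors_apply, conjTranspose_apply, star_sub, star_mul']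
  ring

theorem twoMinors_eq_zero_iff_exists_vecMulVec [Field R] {A : Matrix m n R} :
    twoMinors A = 0 ↔ ∃ (u : m → R) (v : n → R), A = vecMulVec u v := by
  constructor
  · intro hminors
    by_cases hA : A = 0
    · exact ⟨0, 0, by simp [hA]⟩
    obtain ⟨a, b, hab⟩ : ∃ a b, A a b ≠ 0 := by
      contrapose! hA
      exact Matrix.ext hA
    refine ⟨fun i ↦ A i b, fun j ↦ A a j / A a b, Matrix.ext fun i j ↦ ?_⟩
    have hminor : A i j * A a b - A i b * A a j = 0 :=
      congr_fun₂ hminors (i, a) (j, b)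
    rw [vecMulVec_apply, ← mul_div_assoc, eq_div_iff hab]
    exact sub_eq_zero.mp hminor
  · rintro ⟨u, v, rfl⟩
    ext ⟨i, i'⟩ ⟨j, j'⟩
    simp only [twoMinors_apply, vecMulVec_apply, Matrix.zero_apply]
    ring

theorem twoMinors_submatrix_swap_id [CommRing R] (A : Matrix m n R) :
    (twoMinors A).submatrix Prod.swap id = -twoMinors A := by
  ext ⟨i, i'⟩ ⟨j, j'⟩
  simp only [submatrix_apply, Prod.swap_prod_mk, id_eq, Matrix.neg_apply, twoMinors_apply]
  ring

theorem kronecker_self_mul_twoMinors [CommRing R] [Fintype m] (A : Matrix l m R)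
    (B : Matrix m n R) : A ⊗ₖ A * twoMinors B = twoMinors (A * B) := by
  rw [twoMinors, twoMinors, mul_kronecker_mul, Matrix.mul_sub]
  rfl

theorem twoMinors_mul_twoMinors [CommRing R] [Fintype m] (A : Matrix l m R) (B : Matrix m n R) :
    twoMinors A * twoMinors B = 2 • twoMinors (A * B) := by
  have hswap : (A ⊗ₖ A).submatrix id Prod.swap * twoMinors B =
      A ⊗ₖ A * (twoMinors B).submatrix Prod.swap id :=
    submatrix_id_mul_right (A ⊗ₖ A) (twoMinors B) id (Equiv.prodComm m m)
  calc twoMinors A * twoMinors B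
      = A ⊗ₖ A * twoMinors B - (A ⊗ₖ A).submatrix id Prod.swap * twoMinors B :=
        Matrix.sub_mul _ _ _
    _ = A ⊗ₖ A * twoMinors B + A ⊗ₖ A * twoMinors B := by
        rw [hswap, twoMinors_submatrix_swap_id, Matrix.mul_neg, sub_neg_eq_add]
    _ = 2 • twoMinors (A * B) := by
        rw [kronecker_self_mul_twoMinors, two_nsmul]

theorem trace_kronecker_submatrix_swap [NonUnitalNonAssocSemiring R] [Fintype n]
    (M N : Matrix n n R) : ((M ⊗ₖ N).submatrix id Prod.swap).trace = (M * N).trace := by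
  simp only [trace, diag_apply, submatrix_apply, mul_apply, Fintype.sum_prod_type]
  rfl

theorem trace_twoMinors [CommRing R] [Fintype n] (M : Matrix n n R) :
    (twoMinors M).trace = M.trace ^ 2 - (M * M).trace := by
  rw [twoMinors, trace_sub, trace_kronecker, trace_kronecker_submatrix_swap, sq]

theorem trace_twoMinors_mul_conjTranspose [CommRing R] [StarRing R] [Fintype m] [Fintype n]
    (A : Matrix m n R) :
    (twoMinors A * (twoMinors A)ᴴ).trace =
      2 * ((A * Aᴴ).trace ^ 2 - (A * Aᴴ * (A * Aᴴ)).trace) := by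
  rw [← twoMinors_conjTranspose, twoMinors_mul_twoMinors, trace_smul, trace_twoMinors,
    nsmul_eq_mul, Nat.cast_ofNat]

end TwoMinors

section Concurrence

variable {α β : Type*}

/-- The coefficients of a bipartite vector as a matrix, with rows indexed by the first factor and
columns by the second. -/
def coeffMatrix (ψ : α × β → ℂ) : Matrix α β ℂ :=
  Matrix.of (Function.curry ψ)

theorem coeffMatrix_eq_vecMulVec_iff {ψ : α × β → ℂ} {u : α → ℂ} {v : β → ℂ} :
    coeffMatrix ψ = vecMulVec u v ↔ ∀ i j, ψ (i, j) = u i * v j :=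
  Matrix.ext_iff.symm

theorem redMat_eq_coeffMatrix_mul_conjTranspose [Fintype β] (ψ : α × β → ℂ) :
    redMat ψ = coeffMatrix ψ * (coeffMatrix ψ)ᴴ :=
  rfl

variable [Fintype α] [Fintype β]

theorem trace_redMat (ψ : α × β → ℂ) :
    (redMat ψ).trace = ((∑ x, Complex.normSq (ψ x) : ℝ) : ℂ) := by
  simp [trace, redMat, Complex.mul_conj, Fintype.sum_prod_type]

theorem conc_eq_sqrt_trace_twoMinors {ψ : α × β → ℂ} (hψ : ∑ x, Complex.normSq (ψ x) = 1) :
    conc ψ = √(twoMinors (coeffMatrix ψ) * (twoMinors (coeffMatrix ψ))ᴴ).trace.re := by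
  rw [trace_twoMinors_mul_conjTranspose, ← redMat_eq_coeffMatrix_mul_conjTranspose, trace_redMat,
    hψ]
  simp [conc]

open scoped ComplexOrder in
theorem sqrt_re_trace_mul_conjTranspose_eq_zero_iff {A : Matrix α β ℂ} :
    √(A * Aᴴ).trace.re = 0 ↔ A = 0 := by
  have htrace : 0 ≤ (A * Aᴴ).trace := (posSemidef_self_mul_conjTranspose A).trace_nonneg
  obtain ⟨hre, him⟩ := Complex.nonneg_iff.mp htrace
  rw [Real.sqrt_eq_zero hre, ← trace_mul_conjTranspose_self_eq_zero_iff, Complex.ext_iff]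
  exact (and_iff_left him.symm).symm

theorem concurrence_eq_zero_iff_product_general (ψ : α × β → ℂ)
    (hψ : ∑ x, Complex.normSq (ψ x) = 1) :
    conc ψ = 0 ↔ ∃ (u : α → ℂ) (v : β → ℂ), ∀ i j, ψ (i, j) = u i * v j := by
  rw [conc_eq_sqrt_trace_twoMinors hψ, sqrt_re_trace_mul_conjTranspose_eq_zero_iff,
    twoMinors_eq_zero_iff_exists_vecMulVec]
  simp only [coeffMatrix_eq_vecMulVec_iff]

end Concurrence

/-- For a unit vector `ψ` in `ℂ^{d₁} ⊗ ℂ^{d₂}`, the concurrence vanishes if and only if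
`ψ` is a product state. -/
theorem concurrence_eq_zero_iff_product {d₁ d₂ : ℕ}
    (ψ : Fin d₁ × Fin d₂ → ℂ)
    (hψ : ∑ x : Fin d₁ × Fin d₂, Complex.normSq (ψ x) = 1) :
    conc ψ = 0 ↔
      ∃ (u : Fin d₁ → ℂ) (v : Fin d₂ → ℂ), ∀ (i : Fin d₁) (j : Fin d₂),
        ψ (i, j) = u i * v j :=
  concurrence_eq_zero_iff_product_general ψ hψ
end

section
/- For the four-qubit GHZ state |GHZ⟩ = (1/√2)(|0000⟩ + |1111⟩) and the four-qubit W state |W⟩ = (1/2)(|1000⟩ + |0100⟩ + |0010⟩ + |0001⟩), the concurrence rectangular pyramid measure satisfies V₁₂₃₄(GHZ) > V₁₂₃₄(W); that is, the GHZ state is more entangled than the W state under this measure. -/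
open scoped BigOperators

section FourPartite

variable {d₁ d₂ d₃ d₄ : ℕ}

/-- Bipartition concurrence `C_{1|234}`. -/
noncomputable def C1 (ψ : Fin d₁ × Fin d₂ × Fin d₃ × Fin d₄ → ℂ) : ℝ :=
  conc fun p : Fin d₁ × (Fin d₂ × Fin d₃ × Fin d₄) => ψ (p.1, p.2)

/-- Bipartition concurrence `C_{2|134}`. -/
noncomputable def C2 (ψ : Fin d₁ × Fin d₂ × Fin d₃ × Fin d₄ → ℂ) : ℝ :=
  conc fun p : Fin d₂ × (Fin d₁ × Fin d₃ × Fin d₄) => ψ (p.2.1, p.1, p.2.2)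

/-- Bipartition concurrence `C_{3|124}`. -/
noncomputable def C3 (ψ : Fin d₁ × Fin d₂ × Fin d₃ × Fin d₄ → ℂ) : ℝ :=
  conc fun p : Fin d₃ × (Fin d₁ × Fin d₂ × Fin d₄) => ψ (p.2.1, p.2.2.1, p.1, p.2.2.2)

/-- Bipartition concurrence `C_{4|123}`. -/
noncomputable def C4 (ψ : Fin d₁ × Fin d₂ × Fin d₃ × Fin d₄ → ℂ) : ℝ :=
  conc fun p : Fin d₄ × (Fin d₁ × Fin d₂ × Fin d₃) => ψ (p.2.1, p.2.2.1, p.2.2.2, p.1)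

/-- Bipartition concurrence `C_{12|34}`. -/
noncomputable def C12 (ψ : Fin d₁ × Fin d₂ × Fin d₃ × Fin d₄ → ℂ) : ℝ :=
  conc fun p : (Fin d₁ × Fin d₂) × (Fin d₃ × Fin d₄) => ψ (p.1.1, p.1.2, p.2.1, p.2.2)

/-- Bipartition concurrence `C_{13|24}`. -/
noncomputable def C13 (ψ : Fin d₁ × Fin d₂ × Fin d₃ × Fin d₄ → ℂ) : ℝ :=
  conc fun p : (Fin d₁ × Fin d₃) × (Fin d₂ × Fin d₄) => ψ (p.1.1, p.2.1, p.1.2, p.2.2)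

/-- Bipartition concurrence `C_{14|23}`. -/
noncomputable def C14 (ψ : Fin d₁ × Fin d₂ × Fin d₃ × Fin d₄ → ℂ) : ℝ :=
  conc fun p : (Fin d₁ × Fin d₄) × (Fin d₂ × Fin d₃) => ψ (p.1.1, p.2.1, p.2.2, p.1.2)

/-- Bottom edge length `a = (C_{1|234}·C_{2|134}·C_{3|124}·C_{4|123})^{1/4}`. -/
noncomputable def pyrA (ψ : Fin d₁ × Fin d₂ × Fin d₃ × Fin d₄ → ℂ) : ℝ :=
  (C1 ψ * C2 ψ * C3 ψ * C4 ψ) ^ ((1 : ℝ) / 4)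

/-- Height `h = (C_{12|34}·C_{13|24}·C_{14|23})^{1/3}`. -/
noncomputable def pyrH (ψ : Fin d₁ × Fin d₂ × Fin d₃ × Fin d₄ → ℂ) : ℝ :=
  (C12 ψ * C13 ψ * C14 ψ) ^ ((1 : ℝ) / 3)

/-- The concurrence rectangular pyramid measure `V₁₂₃₄(ψ) = (1/3)·a²·h`. -/
noncomputable def V1234 (ψ : Fin d₁ × Fin d₂ × Fin d₃ × Fin d₄ → ℂ) : ℝ :=
  (1 / 3 : ℝ) * (pyrA ψ) ^ 2 * pyrH ψ

end FourPartite

/-- The four-qubit GHZ state `(1/√2)(|0000⟩ + |1111⟩)`. -/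
noncomputable def GHZ4 : Fin 2 × Fin 2 × Fin 2 × Fin 2 → ℂ :=
  fun x => if x = (0, 0, 0, 0) ∨ x = (1, 1, 1, 1) then ((Real.sqrt 2)⁻¹ : ℝ) else 0

/-- The four-qubit W state `(1/2)(|1000⟩ + |0100⟩ + |0010⟩ + |0001⟩)`. -/
noncomputable def W4 : Fin 2 × Fin 2 × Fin 2 × Fin 2 → ℂ :=
  fun x => if x = (1, 0, 0, 0) ∨ x = (0, 1, 0, 0) ∨ x = (0, 0, 1, 0) ∨ x = (0, 0, 0, 1)
    then (1 / 2 : ℂ) else 0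

/-!
Both states are invariant under permutations of the parties, so all four one-party concurrences
coincide, as do all three two-party ones, and the measure collapses to `C₁² C₁₂ / 3`. The two
remaining concurrences are read off from Schmidt decompositions: if `p k` are the squared Schmidt
coefficients, then `Tr ρ² = ∑ k, p k ^ 2`. Every cut considered has Schmidt rank two, with weights
`(1/2, 1/2)` except for the cut `1|234` of `W`, where they are `(1/4, 3/4)`; hence
`V₁₂₃₄(GHZ) = 1/3` while `V₁₂₃₄(W) = 1/4`.
-/

open Matrix

section Schmidt

variable {α β ι : Type*} [Fintype α] [Fintype β] [Fintype ι]

/-- A Schmidt decomposition `ψ = ∑ₖ uₖ ⊗ vₖ` of a bipartite vector, with squared Schmidt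
coefficients `p k`. The two families are orthogonal but not normalised: each Schmidt coefficient is
absorbed into its pair of vectors, so that `p k = ‖uₖ‖² ‖vₖ‖²`. -/
structure IsSchmidtDecomposition (ψ : α × β → ℂ) (u : ι → α → ℂ) (v : ι → β → ℂ)
    (p : ι → ℝ) : Prop where
  eq_sum : ∀ i j, ψ (i, j) = ∑ k, u k i * v k j
  left_orthogonal : Pairwise fun k l => u k ⬝ᵥ star (u l) = 0
  right_orthogonal : Pairwise fun k l => v k ⬝ᵥ star (v l) = 0
  weight_eq : ∀ k, (u k ⬝ᵥ star (u k)) * (v k ⬝ᵥ star (v k)) = p k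

namespace IsSchmidtDecomposition

variable {ψ : α × β → ℂ} {u : ι → α → ℂ} {v : ι → β → ℂ} {p : ι → ℝ}

theorem redMat_eq (h : IsSchmidtDecomposition ψ u v p) :
    redMat ψ = ∑ k, (v k ⬝ᵥ star (v k)) • vecMulVec (u k) (star (u k)) := by
  ext i i'
  calc redMat ψ i i'
      = ∑ j, ∑ k, ∑ l, u k i * v k j * star (u l i' * v l j) := by
        simp [redMat, h.eq_sum, Finset.sum_mul_sum]
    _ = ∑ k, ∑ l, u k i * star (u l i') * (v k ⬝ᵥ star (v l)) := by
        rw [Finset.sum_comm]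
        refine Finset.sum_congr rfl fun k _ => ?_
        rw [Finset.sum_comm]
        refine Finset.sum_congr rfl fun l _ => ?_
        rw [dotProduct, Finset.mul_sum]
        refine Finset.sum_congr rfl fun j _ => ?_
        simp only [star_mul', Pi.star_apply]
        ring
    _ = ∑ k, u k i * star (u k i') * (v k ⬝ᵥ star (v k)) := by
        refine Finset.sum_congr rfl fun k _ => Fintype.sum_eq_single k fun l hl => ?_
        rw [h.right_orthogonal hl.symm, mul_zero]
    _ = _ := by
        simp [Matrix.sum_apply, vecMulVec_apply, mul_comm]

theorem trace_redMat_mul_self (h : IsSchmidtDecomposition ψ u v p) :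
    (redMat ψ * redMat ψ).trace = ∑ k, (p k : ℂ) ^ 2 := by
  have trace_mul (k l : ι) :
      (vecMulVec (u k) (star (u k)) * vecMulVec (u l) (star (u l))).trace =
        (u l ⬝ᵥ star (u k)) * (u k ⬝ᵥ star (u l)) := by
    rw [vecMulVec_mul_vecMulVec, trace_vecMulVec, dotProduct_smul, smul_eq_mul,
      dotProduct_comm (star (u k))]
  simp only [h.redMat_eq, Finset.sum_mul_sum, smul_mul_smul_comm, trace_sum, trace_smul, trace_mul,
    smul_eq_mul]
  refine Finset.sum_congr rfl fun k _ => ?_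
  rw [Fintype.sum_eq_single k fun l hl => by rw [h.left_orthogonal hl, zero_mul, mul_zero],
    ← h.weight_eq]
  ring

theorem conc_eq (h : IsSchmidtDecomposition ψ u v p) :
    conc ψ = √(2 * (1 - ∑ k, p k ^ 2)) := by
  rw [conc, h.trace_redMat_mul_self]
  norm_cast

end IsSchmidtDecomposition

end Schmidt

section Symmetric

variable {d : ℕ} {ψ : Fin d × Fin d × Fin d × Fin d → ℂ}

/-- Invariance of a four-partite vector under all permutations of the parties, expressed through
the adjacent transpositions, which generate the symmetric group. -/
structure IsPermutationSymmetric (ψ : Fin d × Fin d × Fin d × Fin d → ℂ) : Prop where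
  swap₁₂ : ∀ a b c e, ψ (b, a, c, e) = ψ (a, b, c, e)
  swap₂₃ : ∀ a b c e, ψ (a, c, b, e) = ψ (a, b, c, e)
  swap₃₄ : ∀ a b c e, ψ (a, b, e, c) = ψ (a, b, c, e)

namespace IsPermutationSymmetric

theorem C2_eq_C1 (h : IsPermutationSymmetric ψ) : C2 ψ = C1 ψ :=
  congrArg conc <| funext fun _ => h.swap₁₂ ..

theorem C3_eq_C1 (h : IsPermutationSymmetric ψ) : C3 ψ = C1 ψ :=
  congrArg conc <| funext fun _ => (h.swap₂₃ ..).trans (h.swap₁₂ ..)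

theorem C4_eq_C1 (h : IsPermutationSymmetric ψ) : C4 ψ = C1 ψ :=
  congrArg conc <| funext fun _ => (h.swap₃₄ ..).trans <| (h.swap₂₃ ..).trans (h.swap₁₂ ..)

theorem C13_eq_C12 (h : IsPermutationSymmetric ψ) : C13 ψ = C12 ψ :=
  congrArg conc <| funext fun _ => h.swap₂₃ ..

theorem C14_eq_C12 (h : IsPermutationSymmetric ψ) : C14 ψ = C12 ψ :=
  congrArg conc <| funext fun _ => (h.swap₃₄ ..).trans (h.swap₂₃ ..)

theorem pyrA_eq_C1 (h : IsPermutationSymmetric ψ) : pyrA ψ = C1 ψ := by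
  have C1_nonneg : 0 ≤ C1 ψ := Real.sqrt_nonneg _
  calc pyrA ψ = (C1 ψ ^ 4) ^ ((4 : ℕ) : ℝ)⁻¹ := by
        rw [pyrA, h.C2_eq_C1, h.C3_eq_C1, h.C4_eq_C1]
        norm_num [pow_succ]
    _ = C1 ψ := Real.pow_rpow_inv_natCast C1_nonneg four_ne_zero

theorem pyrH_eq_C12 (h : IsPermutationSymmetric ψ) : pyrH ψ = C12 ψ := by
  have C12_nonneg : 0 ≤ C12 ψ := Real.sqrt_nonneg _
  calc pyrH ψ = (C12 ψ ^ 3) ^ ((3 : ℕ) : ℝ)⁻¹ := by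
        rw [pyrH, h.C13_eq_C12, h.C14_eq_C12]
        norm_num [pow_succ]
    _ = C12 ψ := Real.pow_rpow_inv_natCast C12_nonneg three_ne_zero

theorem V1234_eq (h : IsPermutationSymmetric ψ) : V1234 ψ = 1 / 3 * C1 ψ ^ 2 * C12 ψ := by
  rw [V1234, h.pyrA_eq_C1, h.pyrH_eq_C12]

end IsPermutationSymmetric

end Symmetric

section GHZ

theorem inv_sqrt_two_mul_self : (√2 : ℂ)⁻¹ * (√2 : ℂ)⁻¹ = 2⁻¹ := by
  rw [← mul_inv, ← Complex.ofReal_mul, Real.mul_self_sqrt zero_le_two, Complex.ofReal_ofNat]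

theorem isPermutationSymmetric_GHZ4 : IsPermutationSymmetric GHZ4 where
  swap₁₂ a b c e := by simp only [GHZ4, Prod.mk.injEq, and_left_comm]
  swap₂₃ a b c e := by simp only [GHZ4, Prod.mk.injEq, and_left_comm]
  swap₃₄ a b c e := by simp only [GHZ4, Prod.mk.injEq, and_comm]

theorem isSchmidtDecomposition_GHZ4_one_three :
    IsSchmidtDecomposition GHZ4
      ![Pi.single 0 1, Pi.single 1 1]
      ![Pi.single (0, 0, 0) ((√2)⁻¹ : ℝ), Pi.single (1, 1, 1) ((√2)⁻¹ : ℝ)]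
      ![1 / 2, 1 / 2] where
  eq_sum := by simp [GHZ4, Fin.forall_fin_two]
  left_orthogonal := by simp [Pairwise, Fin.forall_fin_two]
  right_orthogonal := by simp [Pairwise, Fin.forall_fin_two]
  weight_eq := by simp [Fin.forall_fin_two, inv_sqrt_two_mul_self]

theorem isSchmidtDecomposition_GHZ4_two_two :
    IsSchmidtDecomposition (GHZ4 ∘ Equiv.prodAssoc _ _ _)
      ![Pi.single (0, 0) 1, Pi.single (1, 1) 1]
      ![Pi.single (0, 0) ((√2)⁻¹ : ℝ), Pi.single (1, 1) ((√2)⁻¹ : ℝ)]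
      ![1 / 2, 1 / 2] where
  eq_sum := by simp [GHZ4, Fin.forall_fin_two]
  left_orthogonal := by simp [Pairwise, Fin.forall_fin_two]
  right_orthogonal := by simp [Pairwise, Fin.forall_fin_two]
  weight_eq := by simp [Fin.forall_fin_two, inv_sqrt_two_mul_self]

theorem C1_GHZ4 : C1 GHZ4 = 1 :=
  isSchmidtDecomposition_GHZ4_one_three.conc_eq.trans (by norm_num [Fin.sum_univ_two])

theorem C12_GHZ4 : C12 GHZ4 = 1 :=
  isSchmidtDecomposition_GHZ4_two_two.conc_eq.trans (by norm_num [Fin.sum_univ_two])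

theorem V1234_GHZ4 : V1234 GHZ4 = 1 / 3 := by
  rw [isPermutationSymmetric_GHZ4.V1234_eq, C1_GHZ4, C12_GHZ4]
  norm_num

end GHZ

section W

theorem isPermutationSymmetric_W4 : IsPermutationSymmetric W4 where
  swap₁₂ := by simp [W4, Fin.forall_fin_two]
  swap₂₃ := by simp [W4, Fin.forall_fin_two]
  swap₃₄ := by simp [W4, Fin.forall_fin_two]

theorem isSchmidtDecomposition_W4_one_three :
    IsSchmidtDecomposition W4
      ![Pi.single 1 1, Pi.single 0 1]
      ![Pi.single (0, 0, 0) (1 / 2),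
        Pi.single (1, 0, 0) (1 / 2) + Pi.single (0, 1, 0) (1 / 2) + Pi.single (0, 0, 1) (1 / 2)]
      ![1 / 4, 3 / 4] where
  eq_sum := by simp [W4, Fin.forall_fin_two]
  left_orthogonal := by simp [Pairwise, Fin.forall_fin_two]
  right_orthogonal := by simp [Pairwise, Fin.forall_fin_two]
  weight_eq := by norm_num [Fin.forall_fin_two]

theorem isSchmidtDecomposition_W4_two_two :
    IsSchmidtDecomposition (W4 ∘ Equiv.prodAssoc _ _ _)
      ![Pi.single (1, 0) 1 + Pi.single (0, 1) 1, Pi.single (0, 0) 1]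
      ![Pi.single (0, 0) (1 / 2), Pi.single (1, 0) (1 / 2) + Pi.single (0, 1) (1 / 2)]
      ![1 / 2, 1 / 2] where
  eq_sum := by simp [W4, Fin.forall_fin_two]
  left_orthogonal := by simp [Pairwise, Fin.forall_fin_two]
  right_orthogonal := by simp [Pairwise, Fin.forall_fin_two]
  weight_eq := by norm_num [Fin.forall_fin_two]

theorem C1_W4 : C1 W4 = √(3 / 4) :=
  isSchmidtDecomposition_W4_one_three.conc_eq.trans (by norm_num [Fin.sum_univ_two])

theorem C12_W4 : C12 W4 = 1 :=
  isSchmidtDecomposition_W4_two_two.conc_eq.trans (by norm_num [Fin.sum_univ_two])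

theorem V1234_W4 : V1234 W4 = 1 / 4 := by
  rw [isPermutationSymmetric_W4.V1234_eq, C1_W4, C12_W4, Real.sq_sqrt (by norm_num)]
  norm_num

end W

/-- The GHZ state is more entangled than the W state under the concurrence rectangular
pyramid measure: `V₁₂₃₄(GHZ) > V₁₂₃₄(W)`. -/
theorem V1234_GHZ4_gt_V1234_W4 : V1234 W4 < V1234 GHZ4 := by
  rw [V1234_W4, V1234_GHZ4]
  norm_num
end

section
/- For the four-qubit states |ψ_A⟩ = (1/2)(|0000⟩ + |1011⟩ + |1101⟩ + |1110⟩) and |ψ_B⟩ = (1/2)(|0000⟩ + |0101⟩ + |1000⟩ + |1110⟩), the concurrence rectangular pyramid measure distinguishes them: V₁₂₃₄(ψ_A) > V₁₂₃₄(ψ_B) > 0. -/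
open scoped BigOperators

/-- The four-qubit state `ψ_A = (1/2)(|0000⟩ + |1011⟩ + |1101⟩ + |1110⟩)`. -/
noncomputable def psiA : Fin 2 × Fin 2 × Fin 2 × Fin 2 → ℂ :=
  fun x => if x = (0, 0, 0, 0) ∨ x = (1, 0, 1, 1) ∨ x = (1, 1, 0, 1) ∨ x = (1, 1, 1, 0)
    then (1 / 2 : ℂ) else 0

/-- The four-qubit state `ψ_B = (1/2)(|0000⟩ + |0101⟩ + |1000⟩ + |1110⟩)`. -/
noncomputable def psiB : Fin 2 × Fin 2 × Fin 2 × Fin 2 → ℂ :=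
  fun x => if x = (0, 0, 0, 0) ∨ x = (0, 1, 0, 1) ∨ x = (1, 0, 0, 0) ∨ x = (1, 1, 1, 0)
    then (1 / 2 : ℂ) else 0

/-!
A state with constant amplitude `c` on a set of basis vectors has reduced density matrix entries
`‖c‖²` times the number of environment indices shared by two rows of its support, so its purity is
`‖c‖⁴` times a sum of squares of such counts. This reduces all fourteen bipartition concurrences of
`ψ_A` and `ψ_B` to finite counts; their squares lie in `{3/4, 1, 5/4}`, and
`V(ψ_A) = (1/3)(3/4)^{1/4}(5/4)^{1/2}`, `V(ψ_B) = (1/3)(3/4)^{3/4}(5/4)^{1/6}`.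
The smaller exponent wins for the base `3/4 < 1`, the larger one for the base `5/4 > 1`.
-/

section Bipartite

variable {α β : Type*} [Fintype β]

theorem conc_nonneg [Fintype α] (ψ : α × β → ℂ) : 0 ≤ conc ψ :=
  Real.sqrt_nonneg _

theorem redMat_isHermitian (ψ : α × β → ℂ) : (redMat ψ).IsHermitian :=
  Matrix.isHermitian_mul_conjTranspose_self (Matrix.of fun i j => ψ (i, j))

theorem trace_redMat_mul_self [Fintype α] (ψ : α × β → ℂ) :
    (redMat ψ * redMat ψ).trace = ∑ i, ∑ i', (‖redMat ψ i i'‖ : ℂ) ^ 2 := by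
  simp only [Matrix.trace, Matrix.diag_apply, Matrix.mul_apply]
  refine Finset.sum_congr rfl fun i _ => Finset.sum_congr rfl fun i' _ => ?_
  rw [← Complex.mul_conj', ← (redMat_isHermitian ψ).apply i' i, starRingEnd_apply]

/-- The number of `j` for which both `(i, j)` and `(i', j)` satisfy `P`. For a state with equal
amplitudes on `P`, this is the entry `(i, i')` of the reduced density matrix up to scale. -/
def overlap (P : α × β → Prop) [DecidablePred P] (i i' : α) : ℕ :=
  Finset.card {j | P (i, j) ∧ P (i', j)}

theorem redMat_ite (P : α × β → Prop) [DecidablePred P] (c : ℂ) (i i' : α) :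
    redMat (fun x => if P x then c else 0) i i' = ‖c‖ ^ 2 * overlap P i i' := by
  simp only [redMat, Matrix.of_apply, apply_ite (starRingEnd ℂ), map_zero, ite_zero_mul_ite_zero,
    Complex.mul_conj', overlap, Finset.sum_ite, Finset.sum_const_zero, add_zero, Finset.sum_const,
    nsmul_eq_mul, mul_comm]

theorem conc_ite_of_sum_overlap_sq [Fintype α] {P : α × β → Prop} [DecidablePred P] {n : ℕ}
    (hn : ∑ i, ∑ i', overlap P i i' ^ 2 = n) (c : ℂ) :
    conc (fun x => if P x then c else 0) = √(2 * (1 - ‖c‖ ^ 4 * n)) := by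
  have purity : (redMat (fun x => if P x then c else 0) *
      redMat (fun x => if P x then c else 0)).trace = ((‖c‖ ^ 4 * n : ℝ) : ℂ) := by
    simp only [trace_redMat_mul_self, redMat_ite, norm_mul, norm_pow, Complex.norm_real, norm_norm,
      Complex.norm_natCast, ← hn]
    push_cast
    simp only [Finset.mul_sum, mul_pow, ← pow_mul, Nat.reduceMul]
  rw [conc, purity, Complex.ofReal_re]

end Bipartite

theorem pyrA_sq {d₁ d₂ d₃ d₄ : ℕ} (ψ : Fin d₁ × Fin d₂ × Fin d₃ × Fin d₄ → ℂ) :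
    pyrA ψ ^ 2 = √(C1 ψ * C2 ψ * C3 ψ * C4 ψ) := by
  have prod_nonneg : 0 ≤ C1 ψ * C2 ψ * C3 ψ * C4 ψ :=
    mul_nonneg (mul_nonneg (mul_nonneg (conc_nonneg _) (conc_nonneg _)) (conc_nonneg _))
      (conc_nonneg _)
  rw [pyrA, ← Real.rpow_mul_natCast prod_nonneg, Real.sqrt_eq_rpow]
  norm_num

theorem C1_psiA : C1 psiA = √(3 / 4) :=
  (conc_ite_of_sum_overlap_sq (n := 10) (by decide) _).trans (by norm_num)

theorem C2_psiA : C2 psiA = 1 :=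
  (conc_ite_of_sum_overlap_sq (n := 8) (by decide) _).trans (by norm_num)

theorem C3_psiA : C3 psiA = 1 :=
  (conc_ite_of_sum_overlap_sq (n := 8) (by decide) _).trans (by norm_num)

theorem C4_psiA : C4 psiA = 1 :=
  (conc_ite_of_sum_overlap_sq (n := 8) (by decide) _).trans (by norm_num)

theorem C12_psiA : C12 psiA = √(5 / 4) :=
  (conc_ite_of_sum_overlap_sq (n := 6) (by decide) _).trans (by norm_num)

theorem C13_psiA : C13 psiA = √(5 / 4) :=
  (conc_ite_of_sum_overlap_sq (n := 6) (by decide) _).trans (by norm_num)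

theorem C14_psiA : C14 psiA = √(5 / 4) :=
  (conc_ite_of_sum_overlap_sq (n := 6) (by decide) _).trans (by norm_num)

theorem C1_psiB : C1 psiB = √(3 / 4) :=
  (conc_ite_of_sum_overlap_sq (n := 10) (by decide) _).trans (by norm_num)

theorem C2_psiB : C2 psiB = 1 :=
  (conc_ite_of_sum_overlap_sq (n := 8) (by decide) _).trans (by norm_num)

theorem C3_psiB : C3 psiB = √(3 / 4) :=
  (conc_ite_of_sum_overlap_sq (n := 10) (by decide) _).trans (by norm_num)

theorem C4_psiB : C4 psiB = √(3 / 4) :=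
  (conc_ite_of_sum_overlap_sq (n := 10) (by decide) _).trans (by norm_num)

theorem C12_psiB : C12 psiB = √(5 / 4) :=
  (conc_ite_of_sum_overlap_sq (n := 6) (by decide) _).trans (by norm_num)

theorem C13_psiB : C13 psiB = 1 :=
  (conc_ite_of_sum_overlap_sq (n := 8) (by decide) _).trans (by norm_num)

theorem C14_psiB : C14 psiB = 1 :=
  (conc_ite_of_sum_overlap_sq (n := 8) (by decide) _).trans (by norm_num)

theorem V1234_psiA : V1234 psiA = 1 / 3 * (3 / 4) ^ (1 / 4 : ℝ) * (5 / 4) ^ (1 / 2 : ℝ) := by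
  have bottom : pyrA psiA ^ 2 = (3 / 4) ^ (1 / 4 : ℝ) := by
    rw [pyrA_sq, C1_psiA, C2_psiA, C3_psiA, C4_psiA]
    simp only [mul_one, Real.sqrt_eq_rpow]
    rw [← Real.rpow_mul (by norm_num)]
    norm_num
  have height : pyrH psiA = (5 / 4) ^ (1 / 2 : ℝ) := by
    rw [pyrH, C12_psiA, C13_psiA, C14_psiA, ← pow_three', Real.sqrt_eq_rpow,
      ← Real.rpow_mul_natCast (by norm_num), ← Real.rpow_mul (by norm_num)]
    norm_num
  rw [V1234, bottom, height]

theorem V1234_psiB : V1234 psiB = 1 / 3 * (3 / 4) ^ (3 / 4 : ℝ) * (5 / 4) ^ (1 / 6 : ℝ) := by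
  have bottom : pyrA psiB ^ 2 = (3 / 4) ^ (3 / 4 : ℝ) := by
    rw [pyrA_sq, C1_psiB, C2_psiB, C3_psiB, C4_psiB, mul_one, ← pow_three', Real.sqrt_eq_rpow,
      Real.sqrt_eq_rpow, ← Real.rpow_mul_natCast (by norm_num), ← Real.rpow_mul (by norm_num)]
    norm_num
  have height : pyrH psiB = (5 / 4) ^ (1 / 6 : ℝ) := by
    rw [pyrH, C12_psiB, C13_psiB, C14_psiB, mul_one, mul_one, Real.sqrt_eq_rpow,
      ← Real.rpow_mul (by norm_num)]
    norm_num
  rw [V1234, bottom, height]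

/-- The concurrence rectangular pyramid measure distinguishes `ψ_A` and `ψ_B`:
`V₁₂₃₄(ψ_A) > V₁₂₃₄(ψ_B) > 0`. -/
theorem V1234_psiA_gt_V1234_psiB :
    V1234 psiB < V1234 psiA ∧ 0 < V1234 psiB := by
  rw [V1234_psiA, V1234_psiB]
  have bottom : (3 / 4 : ℝ) ^ (3 / 4 : ℝ) < (3 / 4) ^ (1 / 4 : ℝ) :=
    Real.rpow_lt_rpow_of_exponent_gt (by norm_num) (by norm_num) (by norm_num)
  have height : (5 / 4 : ℝ) ^ (1 / 6 : ℝ) < (5 / 4) ^ (1 / 2 : ℝ) :=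
    Real.rpow_lt_rpow_of_exponent_lt (by norm_num) (by norm_num)
  exact ⟨by gcongr, by positivity⟩
end

section
/- For the four-qubit state |ψ_C⟩ = (1/√5)(|0000⟩ + |1111⟩ + |0011⟩ + |0101⟩ + |0110⟩), the genuine multipartite concurrence, defined as the minimum of the seven bipartition concurrences, equals 4/5: C_GME(ψ_C) = 4/5. -/
open scoped BigOperators

/-- The genuine multipartite concurrence: the minimum of the seven bipartition
concurrences `C_{1|234}, C_{2|134}, C_{3|124}, C_{4|123}, C_{12|34}, C_{13|24}, C_{14|23}`. -/
noncomputable def CGME {d₁ d₂ d₃ d₄ : ℕ} (ψ : Fin d₁ × Fin d₂ × Fin d₃ × Fin d₄ → ℂ) : ℝ :=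
  min (min (min (C1 ψ) (C2 ψ)) (min (C3 ψ) (C4 ψ))) (min (min (C12 ψ) (C13 ψ)) (C14 ψ))

/-- The four-qubit state `ψ_C = (1/√5)(|0000⟩ + |1111⟩ + |0011⟩ + |0101⟩ + |0110⟩)`. -/
noncomputable def psiC : Fin 2 × Fin 2 × Fin 2 × Fin 2 → ℂ :=
  fun x => if x = (0, 0, 0, 0) ∨ x = (1, 1, 1, 1) ∨ x = (0, 0, 1, 1) ∨ x = (0, 1, 0, 1)
      ∨ x = (0, 1, 1, 0)
    then ((Real.sqrt 5)⁻¹ : ℝ) else 0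

/-!
A superposition of basis vectors with a common amplitude `c` has a combinatorial purity: across
`α × β`, the trace `Tr ρ²` is `‖c‖⁴` times the number of rectangles whose four corners lie in the
support. The support of `ψ_C` is symmetric under permutations of the last three qubits, so only the
cuts `1|234`, `2|134` and `12|34` matter; they have `17`, `13` and `11` rectangles, and the cut with
the most rectangles has the least concurrence, `√(2 (1 - 17 / 25)) = 4 / 5`.
-/

section RectangleCount

variable {α β : Type*} [Fintype α] [Fintype β]

/-- The number of rectangles of a relation `P` between `α` and `β`, that is, of closed walks of
length four from `α` in the bipartite graph of `P`. A rectangle is encoded as `((i, i'), (j, j'))`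
and may be degenerate (`i = i'` or `j = j'`). -/
def rectangleCount (P : α × β → Prop) [DecidablePred P] : ℕ :=
  Finset.card {q : (α × α) × (β × β) | (P (q.1.1, q.2.1) ∧ P (q.1.2, q.2.1)) ∧
    (P (q.1.2, q.2.2) ∧ P (q.1.1, q.2.2))}

lemma trace_redMat_mul_redMat (ψ : α × β → ℂ) :
    Matrix.trace (redMat ψ * redMat ψ) =
      ∑ q : (α × α) × (β × β), (ψ (q.1.1, q.2.1) * starRingEnd ℂ (ψ (q.1.2, q.2.1))) *
        (ψ (q.1.2, q.2.2) * starRingEnd ℂ (ψ (q.1.1, q.2.2))) := by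
  simp only [Matrix.trace, Matrix.diag, Matrix.mul_apply, redMat, Matrix.of_apply,
    Fintype.sum_prod_type, Finset.sum_mul_sum]

lemma trace_redMat_mul_redMat_ite (P : α × β → Prop) [DecidablePred P] (c : ℂ) :
    Matrix.trace (redMat (fun x ↦ if P x then c else 0) * redMat fun x ↦ if P x then c else 0) =
      ((‖c‖ ^ 4 * rectangleCount P : ℝ) : ℂ) := by
  have hc : (c * starRingEnd ℂ c) * (c * starRingEnd ℂ c) = (‖c‖ : ℂ) ^ 4 := by
    rw [Complex.mul_conj']
    ring
  simp only [trace_redMat_mul_redMat, apply_ite (starRingEnd ℂ), map_zero,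
    ite_zero_mul_ite_zero, hc]
  rw [rectangleCount, ← Finset.sum_filter, Finset.sum_const, nsmul_eq_mul]
  push_cast
  ring

lemma conc_ite (P : α × β → Prop) [DecidablePred P] (c : ℂ) :
    conc (fun x ↦ if P x then c else 0) = √(2 * (1 - ‖c‖ ^ 4 * rectangleCount P)) := by
  rw [conc, trace_redMat_mul_redMat_ite, Complex.ofReal_re]

end RectangleCount

lemma CGME_eq_min_of_symmetric {d₁ d : ℕ} {ψ : Fin d₁ × Fin d × Fin d × Fin d → ℂ}
    (h₂₃ : ∀ i j k l, ψ (i, k, j, l) = ψ (i, j, k, l))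
    (h₃₄ : ∀ i j k l, ψ (i, j, l, k) = ψ (i, j, k, l)) :
    CGME ψ = min (C1 ψ) (min (C2 ψ) (C12 ψ)) := by
  have h₂₃₄ (i j k l) : ψ (i, k, l, j) = ψ (i, j, k, l) := (h₃₄ i k j l).trans (h₂₃ i j k l)
  -- `C3 ψ` and `C4 ψ` are definitionally `C2` of `ψ` with its last three arguments permuted;
  -- likewise `C13 ψ` and `C14 ψ` with `C12`.
  have h3 : C3 ψ = C2 ψ := congrArg conc (funext fun _ ↦ h₂₃ _ _ _ _)
  have h4 : C4 ψ = C2 ψ := congrArg conc (funext fun _ ↦ h₂₃₄ _ _ _ _)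
  have h13 : C13 ψ = C12 ψ := congrArg conc (funext fun _ ↦ h₂₃ _ _ _ _)
  have h14 : C14 ψ = C12 ψ := congrArg conc (funext fun _ ↦ h₂₃₄ _ _ _ _)
  rw [CGME, h3, h4, h13, h14, min_self, min_self, min_self, min_assoc (C1 ψ), min_self, min_assoc]

/-- The set of basis vectors appearing in `ψ_C`. -/
def psiCSupport : Finset (Fin 2 × Fin 2 × Fin 2 × Fin 2) :=
  {(0, 0, 0, 0), (1, 1, 1, 1), (0, 0, 1, 1), (0, 1, 0, 1), (0, 1, 1, 0)}

lemma psiC_apply (x : Fin 2 × Fin 2 × Fin 2 × Fin 2) :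
    psiC x = if x ∈ psiCSupport then (((√5)⁻¹ : ℝ) : ℂ) else 0 := by
  simp only [psiC, psiCSupport, Finset.mem_insert, Finset.mem_singleton]

lemma psiC_swap₂₃ (i j k l : Fin 2) : psiC (i, k, j, l) = psiC (i, j, k, l) := by
  have h : ∀ i j k l, (i, k, j, l) ∈ psiCSupport ↔ (i, j, k, l) ∈ psiCSupport := by decide
  simp only [psiC_apply, h i j k l]

lemma psiC_swap₃₄ (i j k l : Fin 2) : psiC (i, j, l, k) = psiC (i, j, k, l) := by
  have h : ∀ i j k l, (i, j, l, k) ∈ psiCSupport ↔ (i, j, k, l) ∈ psiCSupport := by decide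
  simp only [psiC_apply, h i j k l]

lemma conc_psiC_comp {α β : Type*} [Fintype α] [Fintype β]
    (f : α × β → Fin 2 × Fin 2 × Fin 2 × Fin 2) :
    conc (fun p ↦ psiC (f p)) =
      √(2 * (1 - (rectangleCount fun p ↦ f p ∈ psiCSupport : ℝ) / 25)) := by
  have hc : ‖(((√5)⁻¹ : ℝ) : ℂ)‖ ^ 4 = 1 / 25 := by
    rw [Complex.norm_real, Real.norm_of_nonneg (by positivity), inv_pow,
      show (√5) ^ 4 = ((√5) ^ 2) ^ 2 by ring, Real.sq_sqrt (by norm_num)]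
    norm_num
  simp only [psiC_apply, conc_ite, hc, one_div_mul_eq_div]

lemma C1_psiC : C1 psiC = 4 / 5 := by
  have count : rectangleCount (fun p : Fin 2 × (Fin 2 × Fin 2 × Fin 2) ↦
      (p.1, p.2) ∈ psiCSupport) = 17 := by decide
  rw [C1, conc_psiC_comp, count, Real.sqrt_eq_iff_mul_self_eq_of_pos (by norm_num)]
  norm_num

lemma C2_psiC : C2 psiC = √(24 / 25) := by
  have count : rectangleCount (fun p : Fin 2 × (Fin 2 × Fin 2 × Fin 2) ↦
      (p.2.1, p.1, p.2.2) ∈ psiCSupport) = 13 := by decide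
  rw [C2, conc_psiC_comp, count]
  norm_num

lemma C12_psiC : C12 psiC = √(28 / 25) := by
  have count : rectangleCount (fun p : (Fin 2 × Fin 2) × (Fin 2 × Fin 2) ↦
      (p.1.1, p.1.2, p.2.1, p.2.2) ∈ psiCSupport) = 11 := by decide
  rw [C12, conc_psiC_comp, count]
  norm_num

/-- The genuine multipartite concurrence of `ψ_C` equals `4/5`. -/
theorem CGME_psiC : CGME psiC = 4 / 5 := by
  have hC2 : 4 / 5 ≤ C2 psiC := C2_psiC ▸ Real.le_sqrt_of_sq_le (by norm_num)
  have hC12 : 4 / 5 ≤ C12 psiC := C12_psiC ▸ Real.le_sqrt_of_sq_le (by norm_num)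
  rw [CGME_eq_min_of_symmetric psiC_swap₂₃ psiC_swap₃₄, C1_psiC]
  exact min_eq_left (le_min hC2 hC12)
end

section
/- Let N > 3 and let Ψ be a unit vector in ℂ^{d₁} ⊗ ⋯ ⊗ ℂ^{d_N} (represented as Ψ : (∀ i : Fin N, Fin dᵢ) → ℂ with ∑_x |Ψ(x)|² = 1). Then V(Ψ) > 0 if and only if Ψ is genuinely multipartite entangled, i.e. for every nonempty proper subset S of Fin N there exist no vectors u (on the subsystems in S) and v (on the subsystems in Sᶜ) with Ψ(x) = u(x_S)·v(x_{Sᶜ}) for all x; equivalently, V(Ψ) > 0 if and only if C_{S|Sᶜ}(Ψ) > 0 for every nonempty proper subset S of Fin N. -/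
open scoped BigOperators

/-- The bipartition concurrence `C_{S|Sᶜ}(Ψ)` of an `N`-partite pure state with respect to
the bipartition of the parties into `S` and its complement. -/
noncomputable def concS {N : ℕ} {d : Fin N → ℕ} (Ψ : (∀ i, Fin (d i)) → ℂ)
    (S : Finset (Fin N)) : ℝ :=
  conc fun p : ((i : {i : Fin N // i ∈ S}) → Fin (d i)) ×
      ((i : {i : Fin N // i ∉ S}) → Fin (d i)) =>
    Ψ fun i => if h : i ∈ S then p.1 ⟨i, h⟩ else p.2 ⟨i, h⟩

/-- The geometric mean `a` of the `N` one-vs-rest bipartition concurrences. -/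
noncomputable def geoA {N : ℕ} {d : Fin N → ℕ} (Ψ : (∀ i, Fin (d i)) → ℂ) : ℝ :=
  (∏ i : Fin N, concS Ψ {i}) ^ ((1 : ℝ) / N)

/-- The geometric mean `h` of the `2^{N-1} - N - 1` bipartition concurrences `C_{S|Sᶜ}`
with `2 ≤ |S| ≤ ⌊N/2⌋`, each unordered bipartition counted exactly once (for `|S| = N/2`
the representative containing the party `0` is taken). -/
noncomputable def geoH {N : ℕ} [NeZero N] {d : Fin N → ℕ} (Ψ : (∀ i, Fin (d i)) → ℂ) : ℝ :=
  (∏ S ∈ Finset.univ.filter (fun S : Finset (Fin N) =>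
      2 ≤ S.card ∧ (2 * S.card < N ∨ (2 * S.card = N ∧ (0 : Fin N) ∈ S))), concS Ψ S)
    ^ ((1 : ℝ) / (2 ^ (N - 1) - N - 1 : ℕ))

/-- The concurrence regular polygonal pyramid measure `V(Ψ) = (N·a²/12)·cot(π/N)·h`. -/
noncomputable def Vpyr {N : ℕ} [NeZero N] {d : Fin N → ℕ} (Ψ : (∀ i, Fin (d i)) → ℂ) : ℝ :=
  ((N : ℝ) * (geoA Ψ) ^ 2 / 12) * Real.cot (Real.pi / N) * geoH Ψ

/-!
Seen as a matrix, a bipartite unit vector satisfies `C² = ∑ |minor|²`, the sum running over all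
`2 × 2` minors (Lagrange's identity), so its concurrence vanishes exactly when all the minors do,
i.e. when the matrix has rank at most one and the vector is a product. On the other hand `V(Ψ)` is
a positive multiple of `a² h`, hence positive exactly when every concurrence entering `a` and `h`
is. Since `C_{S|Sᶜ} = C_{Sᶜ|S}` and one side of every bipartition enters `a` or `h`, this means
that all bipartition concurrences are positive.
-/

theorem prod_rpow_pos_iff {ι : Type*} {s : Finset ι} {f : ι → ℝ} {r : ℝ}
    (hf : ∀ i ∈ s, 0 ≤ f i) (hr : r ≠ 0) :
    0 < (∏ i ∈ s, f i) ^ r ↔ ∀ i ∈ s, 0 < f i := by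
  refine ⟨fun h i hi => (hf i hi).lt_of_ne' fun hi0 => ?_,
    fun h => Real.rpow_pos_of_pos (Finset.prod_pos h) r⟩
  rw [Finset.prod_eq_zero hi hi0, Real.zero_rpow hr] at h
  exact h.false

theorem cot_pos_of_mem_Ioo {x : ℝ} (hx : x ∈ Set.Ioo 0 (Real.pi / 2)) : 0 < Real.cot x := by
  rw [Real.cot_eq_cos_div_sin]
  exact div_pos (Real.cos_pos_of_mem_Ioo ⟨by linarith [hx.1, Real.pi_pos], hx.2⟩)
    (Real.sin_pos_of_pos_of_lt_pi hx.1 (by linarith [hx.2, Real.pi_pos]))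

theorem add_one_lt_two_pow_sub_one {n : ℕ} (hn : 3 < n) : n + 1 < 2 ^ (n - 1) := by
  obtain ⟨k, rfl⟩ := Nat.exists_eq_add_of_lt hn
  have hk : k < 2 ^ k := Nat.lt_two_pow_self
  rw [show 3 + k + 1 - 1 = k + 3 by lia, pow_add]
  lia

section Bipartite

variable {α β : Type*}

/-- The `2 × 2` minor of `ψ`, read as an `α × β` matrix, whose diagonal entries are `ψ p` and `ψ q`.
Degenerate minors, with a repeated row or column, are allowed and vanish over a commutative ring. -/
def minorAt {R : Type*} [Ring R] (ψ : α × β → R) (p q : α × β) : R :=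
  ψ p * ψ q - ψ (p.1, q.2) * ψ (q.1, p.2)

theorem forall_minorAt_eq_zero_iff_exists_mul {K : Type*} [Field K] (ψ : α × β → K) :
    (∀ p q, minorAt ψ p q = 0) ↔ ∃ (u : α → K) (v : β → K), ∀ p, ψ p = u p.1 * v p.2 := by
  simp only [minorAt, sub_eq_zero]
  constructor
  · intro hminor
    by_cases hψ : ∃ q, ψ q ≠ 0
    · obtain ⟨q, hq⟩ := hψ
      refine ⟨fun i => ψ (i, q.2), fun j => ψ (q.1, j) / ψ q, fun p => ?_⟩
      rw [← mul_div_assoc, eq_div_iff hq, hminor p q]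
    · push Not at hψ
      exact ⟨0, 0, fun p => by simp [hψ p]⟩
  · rintro ⟨u, v, huv⟩ p q
    simp only [huv]
    ring

theorem sum_sum_swap_snd [Fintype α] [Fintype β] {M : Type*} [AddCommMonoid M]
    (F : α × β → α × β → M) :
    ∑ p : α × β, ∑ q : α × β, F (p.1, q.2) (q.1, p.2) = ∑ p, ∑ q, F p q := by
  simp only [Fintype.sum_prod_type]
  refine Finset.sum_congr rfl fun i _ => ?_
  rw [Finset.sum_comm_cycle]
  exact Finset.sum_congr rfl fun j _ => Finset.sum_comm

variable [Fintype α] [Fintype β] (ψ : α × β → ℂ)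

theorem trace_redMat_mul_self_s11 :
    (redMat ψ * redMat ψ).trace =
      ∑ p, ∑ q, ψ p * ψ q * (starRingEnd ℂ) (ψ (p.1, q.2) * ψ (q.1, p.2)) := by
  simp only [Matrix.trace, Matrix.diag_apply, Matrix.mul_apply, redMat, Matrix.of_apply,
    Finset.sum_mul_sum, Fintype.sum_prod_type]
  refine Finset.sum_congr rfl fun i _ => ?_
  rw [Finset.sum_comm]
  refine Finset.sum_congr rfl fun j _ => Finset.sum_congr rfl fun i' _ =>
    Finset.sum_congr rfl fun j' _ => ?_
  rw [map_mul]
  ring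

theorem sum_normSq_minorAt :
    ∑ p, ∑ q, Complex.normSq (minorAt ψ p q) =
      2 * ((∑ p, Complex.normSq (ψ p)) ^ 2 - (redMat ψ * redMat ψ).trace.re) := by
  have hantidiag : ∑ p : α × β, ∑ q : α × β,
      Complex.normSq (ψ (p.1, q.2)) * Complex.normSq (ψ (q.1, p.2)) =
        (∑ p, Complex.normSq (ψ p)) ^ 2 := by
    rw [sum_sum_swap_snd fun p q => Complex.normSq (ψ p) * Complex.normSq (ψ q),
      sq, Finset.sum_mul_sum]
  simp only [minorAt, Complex.normSq_sub, Complex.normSq_mul, Finset.sum_sub_distrib,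
    Finset.sum_add_distrib, ← Finset.mul_sum, hantidiag, trace_redMat_mul_self_s11,
    Complex.re_sum, ← Finset.sum_mul]
  ring

theorem conc_eq_sqrt_sum_normSq_minorAt (hψ : ∑ p, Complex.normSq (ψ p) = 1) :
    conc ψ = √(∑ p, ∑ q, Complex.normSq (minorAt ψ p q)) := by
  rw [conc, sum_normSq_minorAt, hψ, one_pow]

theorem conc_eq_zero_iff_exists_mul (hψ : ∑ p, Complex.normSq (ψ p) = 1) :
    conc ψ = 0 ↔ ∃ (u : α → ℂ) (v : β → ℂ), ∀ p, ψ p = u p.1 * v p.2 := by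
  have hnonneg (p : α × β) : 0 ≤ ∑ q, Complex.normSq (minorAt ψ p q) :=
    Finset.sum_nonneg fun q _ => Complex.normSq_nonneg _
  rw [← forall_minorAt_eq_zero_iff_exists_mul, conc_eq_sqrt_sum_normSq_minorAt ψ hψ,
    Real.sqrt_eq_zero (Finset.sum_nonneg fun p _ => hnonneg p),
    Fintype.sum_eq_zero_iff_of_nonneg hnonneg, funext_iff]
  refine forall_congr' fun p => ?_
  rw [Pi.zero_apply, Fintype.sum_eq_zero_iff_of_nonneg fun q => Complex.normSq_nonneg _,
    funext_iff]
  exact forall_congr' fun q => Complex.normSq_eq_zero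

end Bipartite

section Multipartite

variable {N : ℕ} {d : Fin N → ℕ} (Ψ : (∀ i, Fin (d i)) → ℂ) (S : Finset (Fin N))

/-- `Ψ` is a product vector across the bipartition `S|Sᶜ`; a state is biseparable when this holds
for some nonempty proper `S`. -/
def IsProductAcross : Prop :=
  ∃ (u : ((i : {i : Fin N // i ∈ S}) → Fin (d i)) → ℂ)
    (v : ((i : {i : Fin N // i ∉ S}) → Fin (d i)) → ℂ),
    ∀ x : ∀ i, Fin (d i), Ψ x = u (fun i => x i) * v (fun i => x i)

/-- The splitting of a multi-index into its parts on `S` and on `Sᶜ`. -/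
abbrev splitEquiv (d : Fin N → ℕ) (S : Finset (Fin N)) :
    (∀ i, Fin (d i)) ≃
      ((i : {i : Fin N // i ∈ S}) → Fin (d i)) × ((i : {i : Fin N // i ∉ S}) → Fin (d i)) :=
  Equiv.piEquivPiSubtypeProd (· ∈ S) fun i => Fin (d i)

theorem concS_eq_conc_comp_splitEquiv_symm : concS Ψ S = conc (Ψ ∘ (splitEquiv d S).symm) :=
  rfl

theorem concS_nonneg : 0 ≤ concS Ψ S :=
  Real.sqrt_nonneg _

theorem concS_eq_zero_iff_isProductAcross
    (hΨ : ∑ x : ∀ i, Fin (d i), Complex.normSq (Ψ x) = 1) :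
    concS Ψ S = 0 ↔ IsProductAcross Ψ S := by
  have hsplit : ∑ p, Complex.normSq ((Ψ ∘ (splitEquiv d S).symm) p) = 1 :=
    ((splitEquiv d S).symm.sum_comp fun x => Complex.normSq (Ψ x)).trans hΨ
  rw [concS_eq_conc_comp_splitEquiv_symm, conc_eq_zero_iff_exists_mul _ hsplit]
  refine exists_congr fun u => exists_congr fun v => ?_
  rw [← (splitEquiv d S).forall_congr_right]
  simp only [Function.comp_apply, Equiv.symm_apply_apply]
  rfl

theorem concS_pos_iff_not_isProductAcross
    (hΨ : ∑ x : ∀ i, Fin (d i), Complex.normSq (Ψ x) = 1) :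
    0 < concS Ψ S ↔ ¬ IsProductAcross Ψ S := by
  rw [← concS_eq_zero_iff_isProductAcross Ψ S hΨ, (concS_nonneg Ψ S).lt_iff_ne']

theorem splitEquiv_symm_eq_piecewise (x y : ∀ i, Fin (d i)) :
    (splitEquiv d S).symm ((splitEquiv d S x).1, (splitEquiv d S y).2) = S.piecewise x y := by
  funext i
  by_cases hi : i ∈ S <;> simp [hi]

theorem concS_eq_sqrt_sum_piecewise :
    concS Ψ S = √(2 * (1 - (∑ x, ∑ y, Ψ x * Ψ y *
      (starRingEnd ℂ) (Ψ (S.piecewise x y) * Ψ (S.piecewise y x))).re)) := by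
  rw [concS_eq_conc_comp_splitEquiv_symm, conc, trace_redMat_mul_self_s11, ← (splitEquiv d S).sum_comp]
  simp only [← (splitEquiv d S).sum_comp, Function.comp_apply, splitEquiv_symm_eq_piecewise,
    Equiv.symm_apply_apply]

theorem concS_compl : concS Ψ Sᶜ = concS Ψ S := by
  simp only [concS_eq_sqrt_sum_piecewise, Finset.piecewise_compl, mul_comm]

end Multipartite

section Bipartitions

variable {N : ℕ} [NeZero N]

/-- `S` represents the unordered bipartition `S|Sᶜ` in the convention of `geoH`: it is the smaller
side or, if both sides have the same size, the one containing the party `0`. -/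
def IsSmallSide (S : Finset (Fin N)) : Prop :=
  2 * S.card < N ∨ (2 * S.card = N ∧ (0 : Fin N) ∈ S)

theorem isSmallSide_compl_iff (S : Finset (Fin N)) : IsSmallSide Sᶜ ↔ ¬ IsSmallSide S := by
  have hcard : S.card + Sᶜ.card = N := by simp
  simp only [IsSmallSide, Finset.mem_compl]
  by_cases h0 : (0 : Fin N) ∈ S <;> simp only [h0, not_true, not_false_iff] <;> grind

theorem forall_bipartition_iff_forall_isSmallSide {P : Finset (Fin N) → Prop}
    (hP : ∀ S, P Sᶜ ↔ P S) :
    (∀ S, S.Nonempty → S ≠ Finset.univ → P S) ↔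
      ∀ S, S.Nonempty → S ≠ Finset.univ → IsSmallSide S → P S := by
  refine ⟨fun h S hS hS' _ => h S hS hS', fun h S hS hS' => ?_⟩
  by_cases hsmall : IsSmallSide S
  · exact h S hS hS' hsmall
  · have hcompl : Sᶜ.Nonempty := by simpa [Finset.nonempty_iff_ne_empty] using hS'
    have hcompl' : Sᶜ ≠ Finset.univ := by simpa using hS.ne_empty
    exact (hP S).1 (h Sᶜ hcompl hcompl' ((isSmallSide_compl_iff S).2 hsmall))

theorem forall_bipartition_iff_singleton_and_isSmallSide (hN : 1 < N)
    {P : Finset (Fin N) → Prop} (hP : ∀ S, P Sᶜ ↔ P S) :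
    (∀ S, S.Nonempty → S ≠ Finset.univ → P S) ↔
      (∀ i, P {i}) ∧ ∀ S, 2 ≤ S.card → IsSmallSide S → P S := by
  have hproper {S : Finset (Fin N)} (hS : S.card < N) : S ≠ Finset.univ := by
    rintro rfl
    simp at hS
  constructor
  · intro h
    refine ⟨fun i => h _ (Finset.singleton_nonempty i) (hproper (by simpa)), fun S h2 hsmall => ?_⟩
    refine h S (Finset.card_pos.1 (by lia)) (hproper ?_)
    rcases hsmall with hlt | ⟨heq, -⟩ <;> lia
  · rintro ⟨hsingle, hlarge⟩
    refine (forall_bipartition_iff_forall_isSmallSide hP).2 fun S hS _ hsmall => ?_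
    rcases (Nat.succ_le_of_lt hS.card_pos).eq_or_lt' with hcard | hcard
    · obtain ⟨i, rfl⟩ := Finset.card_eq_one.1 hcard
      exact hsingle i
    · exact hlarge S hcard hsmall

end Bipartitions

section Pyramid

variable {N : ℕ} [NeZero N] {d : Fin N → ℕ} (Ψ : (∀ i, Fin (d i)) → ℂ)

theorem geoA_pos_iff : 0 < geoA Ψ ↔ ∀ i, 0 < concS Ψ {i} := by
  have hexp : (1 : ℝ) / N ≠ 0 := one_div_ne_zero (NeZero.ne _)
  rw [geoA, prod_rpow_pos_iff (fun i _ => concS_nonneg Ψ {i}) hexp]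
  simp only [Finset.mem_univ, true_imp_iff]

theorem geoH_pos_iff (hN : 3 < N) :
    0 < geoH Ψ ↔ ∀ S : Finset (Fin N), 2 ≤ S.card → IsSmallSide S → 0 < concS Ψ S := by
  have hexp : (1 : ℝ) / (2 ^ (N - 1) - N - 1 : ℕ) ≠ 0 := by
    have hlt := add_one_lt_two_pow_sub_one hN
    exact one_div_ne_zero (Nat.cast_ne_zero.2 (by lia))
  rw [geoH, prod_rpow_pos_iff (fun S _ => concS_nonneg Ψ S) hexp]
  simp only [Finset.mem_filter, Finset.mem_univ, true_and, and_imp, IsSmallSide]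

theorem Vpyr_pos_iff_geoA_pos_and_geoH_pos (hN : 2 < N) :
    0 < Vpyr Ψ ↔ 0 < geoA Ψ ∧ 0 < geoH Ψ := by
  have hN' : (2 : ℝ) < N := mod_cast hN
  have hcot : 0 < Real.cot (Real.pi / N) :=
    cot_pos_of_mem_Ioo ⟨by positivity, div_lt_div_of_pos_left Real.pi_pos two_pos hN'⟩
  have hA : 0 ≤ geoA Ψ := Real.rpow_nonneg (Finset.prod_nonneg fun i _ => concS_nonneg Ψ {i}) _
  have hH : 0 ≤ geoH Ψ := Real.rpow_nonneg (Finset.prod_nonneg fun S _ => concS_nonneg Ψ S) _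
  refine ⟨fun hV => ⟨hA.lt_of_ne' fun hA0 => ?_, hH.lt_of_ne' fun hH0 => ?_⟩,
    fun ⟨hA, hH⟩ => by unfold Vpyr; positivity⟩
  · simp [Vpyr, hA0] at hV
  · simp [Vpyr, hH0] at hV

theorem Vpyr_pos_iff_forall_concS_pos (hN : 3 < N) :
    0 < Vpyr Ψ ↔ ∀ S : Finset (Fin N), S.Nonempty → S ≠ Finset.univ → 0 < concS Ψ S := by
  rw [Vpyr_pos_iff_geoA_pos_and_geoH_pos Ψ (by lia), geoA_pos_iff, geoH_pos_iff Ψ hN,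
    forall_bipartition_iff_singleton_and_isSmallSide (by lia) fun S => by rw [concS_compl]]

end Pyramid

/-- For `N > 3`, the concurrence regular polygonal pyramid measure of a unit vector is
positive iff the state is genuinely multipartite entangled (not a product across any
bipartition `S|Sᶜ`), equivalently iff all bipartition concurrences are positive. -/
theorem Vpyr_pos_iff_GME {N : ℕ} [NeZero N] (hN : 3 < N) {d : Fin N → ℕ}
    (Ψ : (∀ i, Fin (d i)) → ℂ)
    (hΨ : ∑ x : ∀ i, Fin (d i), Complex.normSq (Ψ x) = 1) :
    (0 < Vpyr Ψ ↔
      ¬ ∃ S : Finset (Fin N), S.Nonempty ∧ S ≠ Finset.univ ∧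
        ∃ (u : ((i : {i : Fin N // i ∈ S}) → Fin (d i)) → ℂ)
          (v : ((i : {i : Fin N // i ∉ S}) → Fin (d i)) → ℂ),
          ∀ x : ∀ i, Fin (d i),
            Ψ x = u (fun i => x i) * v (fun i => x i)) ∧
    (0 < Vpyr Ψ ↔
      ∀ S : Finset (Fin N), S.Nonempty → S ≠ Finset.univ → 0 < concS Ψ S) := by
  have hall := Vpyr_pos_iff_forall_concS_pos Ψ hN
  refine ⟨?_, hall⟩
  change _ ↔ ¬ ∃ S : Finset (Fin N), S.Nonempty ∧ S ≠ Finset.univ ∧ IsProductAcross Ψ S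
  rw [hall]
  push Not
  simp only [concS_pos_iff_not_isProductAcross Ψ _ hΨ]
end
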